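/- For agents of the same type θ > 0 colluding by equal effort split with no side payments, mimicking a θ̂-monopoly with θ̂ < θ yields strictly lower per-agent utility than mimicking the θ-monopoly; i.e., for 0 < θ̂ < θ, θ̂(4θθ̂ + 4θ - θ̂)/(8θ(2θ̂+1)²) < θ(4θ+3)/(8(2θ+1)²). -/

import Mathlib

/-!
Two colluding agents of type `θ` who split the effort equally have quadratic costs half as large as
those of a single agent, so together they are a monopolist of type `2θ`. The payoff of that
monopolist is a concave parabola in total effort with vertex at the `2θ`-monopoly effort, and the
monopoly effort increases with the type. Mimicking a `θhat`-monopoly therefore pays strictly more as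
`θhat` grows up to `2θ`, in particular up to `θ`.
-/

open Set

section EffortCollusion

/-- The utility of a monopolist of type `θ` exerting effort `e`: a gain `e * (lam - e)`, where `lam`
is the scale written `λ` in the paper, less the quadratic cost `e ^ 2 / (2 * θ)`. -/
noncomputable def monopolyUtility (lam θ e : ℝ) : ℝ :=
  e * (lam - e) - e ^ 2 / (2 * θ)

/-- The effort of a `θ`-monopoly, the vertex of the parabola `monopolyUtility lam θ`. -/
noncomputable def monopolyEffort (lam θ : ℝ) : ℝ :=
  lam * θ / (2 * θ + 1)

/-- The per-agent utility of two agents of type `θ` who exert `e / 2` each and share the gain from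
the total effort `e` equally. -/
noncomputable def collusionUtility (lam θ e : ℝ) : ℝ :=
  e * (lam - e) / 2 - (e / 2) ^ 2 / (2 * θ)

variable {lam θ θhat : ℝ}

theorem monopolyUtility_eq_sub_sq (hθ : θ ≠ 0) (hθ' : 2 * θ + 1 ≠ 0) (e : ℝ) :
    monopolyUtility lam θ e = monopolyUtility lam θ (monopolyEffort lam θ) -
      (2 * θ + 1) / (2 * θ) * (monopolyEffort lam θ - e) ^ 2 := by
  unfold monopolyUtility monopolyEffort
  field_simp
  ring

theorem strictMonoOn_monopolyUtility (hθ : 0 < θ) :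
    StrictMonoOn (monopolyUtility lam θ) (Iic (monopolyEffort lam θ)) := by
  intro e _ e' he' hlt
  have hsq : (monopolyEffort lam θ - e') ^ 2 < (monopolyEffort lam θ - e) ^ 2 :=
    pow_lt_pow_left₀ (sub_lt_sub_left hlt _) (sub_nonneg.2 he') two_ne_zero
  rw [monopolyUtility_eq_sub_sq hθ.ne' (by positivity) e,
    monopolyUtility_eq_sub_sq hθ.ne' (by positivity) e']
  gcongr

theorem strictMonoOn_monopolyEffort (hlam : 0 < lam) :
    StrictMonoOn (monopolyEffort lam) (Ioi (-1 / 2)) := by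
  intro x hx y hy hxy
  have hx' : 0 < 2 * x + 1 := by linarith [mem_Ioi.1 hx]
  have hy' : 0 < 2 * y + 1 := by linarith [mem_Ioi.1 hy]
  unfold monopolyEffort
  rw [div_lt_div_iff₀ hx' hy']
  linarith [mul_lt_mul_of_pos_left hxy hlam]

theorem collusionUtility_eq_monopolyUtility_div_two (e : ℝ) :
    collusionUtility lam θ e = monopolyUtility lam (2 * θ) e / 2 := by
  unfold collusionUtility monopolyUtility
  ring

theorem strictMonoOn_collusionUtility_monopolyEffort (hlam : 0 < lam) (hθ : 0 < θ) :
    StrictMonoOn (fun x ↦ collusionUtility lam θ (monopolyEffort lam x))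
      (Ioc (-1 / 2) (2 * θ)) := by
  intro x hx y hy hxy
  have hmono := strictMonoOn_monopolyEffort hlam
  have h2θ : 2 * θ ∈ Ioi (-1 / 2 : ℝ) := hx.1.trans_le hx.2
  simp only [collusionUtility_eq_monopolyUtility_div_two]
  gcongr
  exact strictMonoOn_monopolyUtility (by positivity) (hmono.monotoneOn hx.1 h2θ hx.2)
    (hmono.monotoneOn hy.1 h2θ hy.2) (hmono hx.1 hy.1 hxy)

theorem collusionUtility_monopolyEffort (hθ : θ ≠ 0) (hθhat : 2 * θhat + 1 ≠ 0) :
    collusionUtility lam θ (monopolyEffort lam θhat) =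
      lam ^ 2 * (θhat * (4 * θ * θhat + 4 * θ - θhat) / (8 * θ * (2 * θhat + 1) ^ 2)) := by
  have hsub : lam - lam * θhat / (2 * θhat + 1) = lam * (θhat + 1) / (2 * θhat + 1) := by
    rw [sub_div' hθhat]
    ring
  unfold collusionUtility monopolyEffort
  rw [hsub]
  field_simp
  ring

theorem collusionUtility_monopolyEffort_self (hθ : θ ≠ 0) (hθ' : 2 * θ + 1 ≠ 0) :
    collusionUtility lam θ (monopolyEffort lam θ) =
      lam ^ 2 * (θ * (4 * θ + 3) / (8 * (2 * θ + 1) ^ 2)) := by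
  rw [collusionUtility_monopolyEffort hθ hθ']
  field_simp
  ring

end EffortCollusion

theorem stmt_8 (θ θhat : ℝ) (hθhat : 0 < θhat) (h : θhat < θ) :
    θhat * (4 * θ * θhat + 4 * θ - θhat) / (8 * θ * (2 * θhat + 1) ^ 2) <
    θ * (4 * θ + 3) / (8 * (2 * θ + 1) ^ 2) := by
  have hθ : 0 < θ := hθhat.trans h
  have hlt : collusionUtility 1 θ (monopolyEffort 1 θhat) <
      collusionUtility 1 θ (monopolyEffort 1 θ) :=
    strictMonoOn_collusionUtility_monopolyEffort one_pos hθ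
      ⟨by linarith, by linarith⟩ ⟨by linarith, by linarith⟩ h
  rwa [collusionUtility_monopolyEffort hθ.ne' (by positivity),
    collusionUtility_monopolyEffort_self hθ.ne' (by positivity),
    one_pow, one_mul, one_mul] at hlt
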